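/- Let A be a hereditary abelian category (Ext^i vanishes for i ≥ 2) with enough injectives. Then every object t of the unbounded derived category D(A) is isomorphic to the direct sum over i ∈ ℤ of its shifted homology objects H_i(t)[i]. -/

import Mathlib

open CategoryTheory Limits

namespace Hered
open DerivedCategory Pretriangulated

variable {C : Type*} [Category C] [Abelian C]

lemma single_isKInjective (I : C) [Injective I] (m : ℤ) :
    CochainComplex.IsKInjective ((HomologicalComplex.single C (ComplexShape.up ℤ) m).obj I) :=
  CochainComplex.isKInjective_of_injective _ m

/-- A chain map to a single complex of an injective, zero on homology, is null-homotopic. -/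
lemma homotopy_zero (K : CochainComplex C ℤ) (I : C) [Injective I] (m : ℤ)
    (f : K ⟶ (HomologicalComplex.single C (ComplexShape.up ℤ) m).obj I)
    (hf : HomologicalComplex.homologyMap f m = 0) : Nonempty (Homotopy f 0) := by
  have h1 : K.iCycles m ≫ f.f m = 0 := by
    have h2 := HomologicalComplex.homologyπ_naturality f m
    rw [hf, comp_zero] at h2
    have h3 : HomologicalComplex.cyclesMap f m = 0 := by
      have := (((HomologicalComplex.single C (ComplexShape.up ℤ) m).obj I).isoHomologyπ _ m rfl rfl)
      rw [← cancel_mono (((HomologicalComplex.single C (ComplexShape.up ℤ) m).obj I).isoHomologyπ _ m rfl rfl).hom]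
      simpa using h2.symm
    rw [← HomologicalComplex.cyclesMap_i, h3, zero_comp]
  have hex : (ShortComplex.mk (K.iCycles m) (K.d m (m+1)) (by simp)).Exact :=
    ShortComplex.exact_of_f_is_kernel _ (K.cyclesIsKernel m (m+1) (by simp))
  obtain ⟨h, hh⟩ : ∃ h : K.X (m+1) ⟶ _, K.d m (m+1) ≫ h = f.f m :=
    ⟨hex.descToInjective _ h1, hex.comp_descToInjective _ _⟩
  refine ⟨(CochainComplex.HomComplex.Cochain.equivHomotopy f 0).symm
    ⟨CochainComplex.HomComplex.Cochain.single h (-1), ?_⟩⟩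
  rw [CochainComplex.HomComplex.Cochain.ofHom_zero, add_zero]
  ext n
  rw [CochainComplex.HomComplex.δ_v (-1) 0 (neg_add_cancel 1) _ n n (by lia) (n-1) (n+1) rfl rfl]
  by_cases hn : n = m
  · subst hn
    rw [CochainComplex.HomComplex.Cochain.single_v_eq_zero _ _ _ _ _ (by lia)]
    simp [hh]
  · exact (HomologicalComplex.isZero_single_obj_X _ _ _ _ hn).eq_of_tgt _ _

/-- Chain map to the single complex of an injective inducing a given map on homology. -/
lemma exists_map (K : CochainComplex C ℤ) (I : C) [Injective I] (m : ℤ)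
    (g : K.homology m ⟶ ((HomologicalComplex.single C (ComplexShape.up ℤ) m).obj I).homology m) :
    ∃ f : K ⟶ (HomologicalComplex.single C (ComplexShape.up ℤ) m).obj I,
      HomologicalComplex.homologyMap f m = g := by
  let e := HomologicalComplex.singleObjHomologySelfIso (ComplexShape.up ℤ) m I
  let o : K.opcycles m ⟶ I := Injective.factorThru (g ≫ e.hom) (K.homologyι m)
  have ho : K.homologyι m ≫ o = g ≫ e.hom := Injective.comp_factorThru _ _
  refine ⟨HomologicalComplex.mkHomToSingle (K.pOpcycles m ≫ o) (by simp), ?_⟩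
  rw [← cancel_mono (HomologicalComplex.homologyι _ m), HomologicalComplex.homologyι_naturality,
    ← cancel_mono (HomologicalComplex.singleObjOpcyclesSelfIso (ComplexShape.up ℤ) m I).inv,
    Category.assoc, Category.assoc, HomologicalComplex.homologyι_singleObjOpcyclesSelfIso_inv,
    ← ho]
  congr 1
  rw [← cancel_epi (K.pOpcycles m), HomologicalComplex.p_opcyclesMap_assoc,
    HomologicalComplex.mkHomToSingle_f]
  have h : (HomologicalComplex.singleObjXSelf (ComplexShape.up ℤ) m I).inv ≫
      ((HomologicalComplex.single C (ComplexShape.up ℤ) m).obj I).pOpcycles m ≫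
        (HomologicalComplex.singleObjOpcyclesSelfIso (ComplexShape.up ℤ) m I).inv = 𝟙 I := by
    rw [← Category.assoc, Iso.comp_inv_eq, HomologicalComplex.singleObjOpcyclesSelfIso_hom]
    simp
  rw [Category.assoc, h, Category.comp_id]

variable [HasDerivedCategory C]

/-- Homology of the image of a complex in the derived category. -/
noncomputable def hI (K : CochainComplex C ℤ) (m : ℤ) :
    (homologyFunctor C m).obj (Q.obj K) ≅ K.homology m :=
  (homologyFunctorFactors C m).app K

lemma homologyMap_eq (K L : CochainComplex C ℤ) (f : K ⟶ L) (m : ℤ) :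
    (homologyFunctor C m).map (Q.map f) =
      (hI K m).hom ≫ HomologicalComplex.homologyMap f m ≫ (hI L m).inv := by
  rw [← Category.assoc, Iso.eq_comp_inv]
  exact homologyFunctorFactors_hom_naturality f m

lemma eq_zero_of_homology_aux (X : DerivedCategory C) (L : CochainComplex C ℤ)
    [L.IsKInjective] (m : ℤ)
    (hL : ∀ (K : CochainComplex C ℤ) (f : K ⟶ L), HomologicalComplex.homologyMap f m = 0 →
      Nonempty (Homotopy f 0))
    (f : X ⟶ Q.obj L) (hf : (homologyFunctor C m).map f = 0) : f = 0 := by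
  obtain ⟨K, ⟨e⟩⟩ : ∃ K, Nonempty (Q.obj K ≅ X) := ⟨_, ⟨Q.objObjPreimageIso X⟩⟩
  obtain ⟨φ, hφ⟩ := (CochainComplex.IsKInjective.Qh_map_bijective
    ((HomotopyCategory.quotient _ _).obj K) L).2
    ((quotientCompQhIso C).hom.app K ≫ (e.hom ≫ f) ≫ (quotientCompQhIso C).inv.app L)
  obtain ⟨g, rfl⟩ := (HomotopyCategory.quotient _ _).map_surjective φ
  have hg : Q.map g = e.hom ≫ f := by
    rw [← cancel_epi ((quotientCompQhIso C).hom.app K), ← quotientCompQhIso_hom_naturality, hφ]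
    simp
  have h0 : HomologicalComplex.homologyMap g m = 0 := by
    have := homologyMap_eq K L g m
    rw [hg, Functor.map_comp, hf, comp_zero] at this
    rw [← cancel_mono (hI L m).inv,
      ← cancel_epi (hI K m).hom, ← this]
    simp
  obtain ⟨h⟩ := hL K g h0
  have := Q_map_eq_of_homotopy (C := C) h
  rw [hg, Functor.map_zero] at this
  rw [← cancel_epi e.hom, this, comp_zero]

lemma eq_zero_of_homology (X : DerivedCategory C) (I : C) [Injective I] (m : ℤ)
    (f : X ⟶ (singleFunctor C m).obj I) (hf : (homologyFunctor C m).map f = 0) : f = 0 :=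
  have := single_isKInjective I m
  eq_zero_of_homology_aux X ((HomologicalComplex.single C (ComplexShape.up ℤ) m).obj I) m
    (fun K f hf => homotopy_zero K I m f hf) f hf

lemma exists_of_homology_aux (X : DerivedCategory C) (L : CochainComplex C ℤ) (m : ℤ)
    (hL : ∀ (K : CochainComplex C ℤ) (g : K.homology m ⟶ L.homology m), ∃ f : K ⟶ L,
      HomologicalComplex.homologyMap f m = g)
    (g : (homologyFunctor C m).obj X ⟶ (homologyFunctor C m).obj (Q.obj L)) :
    ∃ f : X ⟶ Q.obj L, (homologyFunctor C m).map f = g := by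
  obtain ⟨K, ⟨e⟩⟩ : ∃ K, Nonempty (Q.obj K ≅ X) := ⟨_, ⟨Q.objObjPreimageIso X⟩⟩
  obtain ⟨f, hf⟩ := hL K ((hI K m).inv ≫
    (homologyFunctor C m).map e.hom ≫ g ≫ (hI L m).hom)
  refine ⟨e.inv ≫ Q.map f, ?_⟩
  rw [Functor.map_comp, homologyMap_eq, hf]
  simp only [Category.assoc, Iso.hom_inv_id_assoc, Iso.hom_inv_id, Category.comp_id]
  rw [← Functor.map_comp_assoc, e.inv_hom_id]
  simp

lemma exists_of_homology (X : DerivedCategory C) (I : C) [Injective I] (m : ℤ)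
    (g : (homologyFunctor C m).obj X ⟶ (homologyFunctor C m).obj ((singleFunctor C m).obj I)) :
    ∃ f : X ⟶ (singleFunctor C m).obj I, (homologyFunctor C m).map f = g :=
  exists_of_homology_aux X ((HomologicalComplex.single C (ComplexShape.up ℤ) m).obj I) m
    (fun K g => exists_map K I m g) g

lemma nonempty_homology_single (Y : C) (n : ℤ) :
    Nonempty ((homologyFunctor C n).obj ((singleFunctor C n).obj Y) ≅ Y) :=
  ⟨(homologyFunctorFactors C n).app ((HomologicalComplex.single C (ComplexShape.up ℤ) n).obj Y) ≪≫
    HomologicalComplex.singleObjHomologySelfIso (ComplexShape.up ℤ) n Y⟩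

lemma isIso_homology_mor₁ (T : Triangle (DerivedCategory C)) (hT : T ∈ distTriang _) (n : ℤ)
    (h0 : IsZero ((homologyFunctor C (n-1)).obj T.obj₃))
    (h1 : IsZero ((homologyFunctor C n).obj T.obj₃)) :
    IsIso ((homologyFunctor C n).map T.mor₁) := by
  have : Mono ((homologyFunctor C n).map T.mor₁) :=
    (HomologySequence.mono_homologyMap_mor₁_iff T hT (n-1) n (by lia)).2 (h0.eq_of_src _ _)
  have : Epi ((homologyFunctor C n).map T.mor₁) :=
    (HomologySequence.epi_homologyMap_mor₁_iff T hT n).2 (h1.eq_of_tgt _ _)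
  exact isIso_of_mono_of_epi _

lemma isIso_homology_mor₂ (T : Triangle (DerivedCategory C)) (hT : T ∈ distTriang _) (n : ℤ)
    (h0 : IsZero ((homologyFunctor C n).obj T.obj₁))
    (h1 : IsZero ((homologyFunctor C (n+1)).obj T.obj₁)) :
    IsIso ((homologyFunctor C n).map T.mor₂) := by
  have : Mono ((homologyFunctor C n).map T.mor₂) :=
    (HomologySequence.mono_homologyMap_mor₂_iff T hT n).2 (h0.eq_of_src _ _)
  have : Epi ((homologyFunctor C n).map T.mor₂) :=
    (HomologySequence.epi_homologyMap_mor₂_iff T hT n (n+1) (by lia)).2 (h1.eq_of_tgt _ _)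
  exact isIso_of_mono_of_epi _

/-- Vanishing of `Ext²` in arbitrary degrees. -/
lemma ext_two_zero (hher : ∀ (X Y : C) (n : ℤ), 2 ≤ n →
      ∀ f : (DerivedCategory.singleFunctor C 0).obj X ⟶
        ((DerivedCategory.singleFunctor C 0).obj Y)⟦n⟧, f = 0)
    (Y Z : C) (n : ℤ) (f : (singleFunctor C n).obj Y ⟶ ((singleFunctor C (n-1)).obj Z)⟦(1 : ℤ)⟧) :
    f = 0 := by
  let e1 : ((singleFunctor C n).obj Y)⟦n⟧ ≅ (singleFunctor C 0).obj Y :=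
    ((singleFunctors C).shiftIso n 0 n (by lia)).app Y
  let e2 : ((singleFunctor C (n-1)).obj Z)⟦(1 : ℤ)⟧ ≅ (singleFunctor C (n-2)).obj Z :=
    ((singleFunctors C).shiftIso 1 (n-2) (n-1) (by lia)).app Z
  let e3 : ((singleFunctor C (n-2)).obj Z)⟦n⟧ ≅ (singleFunctor C (-2)).obj Z :=
    ((singleFunctors C).shiftIso n (-2) (n-2) (by lia)).app Z
  let e4 : ((singleFunctor C 0).obj Z)⟦(2 : ℤ)⟧ ≅ (singleFunctor C (-2)).obj Z :=
    ((singleFunctors C).shiftIso 2 (-2) 0 (by lia)).app Z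
  have := hher Y Z 2 le_rfl (e1.inv ≫ f⟦n⟧' ≫ e2.hom⟦n⟧' ≫ e3.hom ≫ e4.inv)
  apply (shiftFunctor (DerivedCategory C) n).map_injective
  rw [Functor.map_zero]
  rw [← cancel_epi e1.inv, ← cancel_mono (e2.hom⟦n⟧'), ← cancel_mono e3.hom, ← cancel_mono e4.inv]
  simpa using this

/-- Two-term brutal truncation of a complex concentrated in degrees `≤ n`. -/
lemma exists_two_term (L : CochainComplex C ℤ) (n : ℤ) [L.IsStrictlyLE n] :
    ∃ (P : CochainComplex C ℤ) (p : P ⟶ L), P.IsStrictlyLE n ∧ P.IsStrictlyGE (n-1) ∧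
      IsIso (HomologicalComplex.homologyMap p n) := by
  have hr : (ComplexShape.up ℤ).Rel (n-1) n := by simp
  have hne : n - 1 ≠ n := by lia
  let P := HomologicalComplex.double (L.d (n-1) n) hr
  have hP : ∀ i, i ≠ n-1 → i ≠ n → IsZero (P.X i) :=
    fun i h h' => HomologicalComplex.isZero_double_X _ _ i h h'
  let p : P ⟶ L := HomologicalComplex.mkHomFromDouble hr hne (𝟙 _) (𝟙 _) (by simp) (by
    intro k hk
    exact (L.isZero_of_isStrictlyLE n k (by simp at hk; lia)).eq_of_tgt _ _)
  refine ⟨P, p, ?_, ?_, ?_⟩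
  · rw [CochainComplex.isStrictlyLE_iff]
    exact fun i hi => hP i (by lia) (by lia)
  · rw [CochainComplex.isStrictlyGE_iff]
    exact fun i hi => hP i (by lia) (by lia)
  · rw [← quasiIsoAt_iff_isIso_homologyMap,
      quasiIsoAt_iff' p (n-1) n (n+1) (by simp) (by simp)]
    have h1 : IsIso (p.f (n-1)) := by
      simp only [p, HomologicalComplex.mkHomFromDouble_f₀]; infer_instance
    have h2 : IsIso (p.f n) := by
      simp only [p, HomologicalComplex.mkHomFromDouble_f₁]; infer_instance
    have h3 : Mono (p.f (n+1)) :=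
      ⟨fun _ _ _ => (hP (n+1) (by lia) (by lia)).eq_of_tgt _ _⟩
    let φ := (HomologicalComplex.shortComplexFunctor' C (ComplexShape.up ℤ) (n-1) n (n+1)).map p
    have : Epi φ.τ₁ := by change Epi (p.f (n-1)); infer_instance
    have : IsIso φ.τ₂ := h2
    have : Mono φ.τ₃ := h3
    exact ShortComplex.quasiIso_of_epi_of_isIso_of_mono φ

lemma exists_section (hher : ∀ (X Y : C) (n : ℤ), 2 ≤ n →
      ∀ f : (DerivedCategory.singleFunctor C 0).obj X ⟶
        ((DerivedCategory.singleFunctor C 0).obj Y)⟦n⟧, f = 0)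
    (t : DerivedCategory C) (n : ℤ) :
    ∃ φ : (singleFunctor C n).obj ((homologyFunctor C n).obj t) ⟶ t,
      IsIso ((homologyFunctor C n).map φ) := by
  let τ : Triangulated.TStructure (DerivedCategory C) := TStructure.t
  -- truncation above
  obtain ⟨L, hL, ⟨e⟩⟩ := exists_iso_Q_obj_of_isLE ((τ.truncLT (n+1)).obj t) n
  let ι' : (τ.truncLT (n+1)).obj t ⟶ t := (τ.truncLTι (n+1)).app t
  have i1 : IsIso ((homologyFunctor C n).map ι') := by
    have hGE : IsGE ((τ.truncGE (n+1)).obj t) (n+1) :=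
      inferInstanceAs (τ.IsGE ((τ.truncGE (n+1)).obj t) (n+1))
    exact isIso_homology_mor₁ _ (τ.triangleLTGE_distinguished (n+1) t) n
      (isZero_of_isGE ((τ.truncGE (n+1)).obj t) (n+1) (n-1) (by lia))
      (isZero_of_isGE ((τ.truncGE (n+1)).obj t) (n+1) n (by lia))
  obtain ⟨P, p, hPL, hPG, hp⟩ := exists_two_term L n
  have i2 : IsIso ((homologyFunctor C n).map (Q.map p)) := by
    rw [homologyMap_eq]; infer_instance
  -- splitting
  let X := Q.obj P
  have hXL : τ.IsLE X n := inferInstanceAs ((Q.obj P).IsLE n)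
  have hXG : τ.IsGE X (n-1) := inferInstanceAs ((Q.obj P).IsGE (n-1))
  have a1 : IsLE ((τ.truncLT n).obj X) (n-1) :=
    inferInstanceAs (τ.IsLE ((τ.truncLT n).obj X) (n-1))
  have a2 : IsGE ((τ.truncLT n).obj X) (n-1) :=
    inferInstanceAs (τ.IsGE ((τ.truncLT n).obj X) (n-1))
  have a3 : IsLE ((τ.truncGE n).obj X) n := inferInstanceAs (τ.IsLE ((τ.truncGE n).obj X) n)
  have a4 : IsGE ((τ.truncGE n).obj X) n := inferInstanceAs (τ.IsGE ((τ.truncGE n).obj X) n)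
  obtain ⟨Z, ⟨eZ⟩⟩ := exists_iso_singleFunctor_obj_of_isGE_of_isLE ((τ.truncLT n).obj X) (n-1)
  obtain ⟨Y, ⟨eY⟩⟩ := exists_iso_singleFunctor_obj_of_isGE_of_isLE ((τ.truncGE n).obj X) n
  have hδ : (τ.truncGEδLT n).app X = 0 := by
    have := ext_two_zero hher Y Z n (eY.inv ≫ (τ.truncGEδLT n).app X ≫ eZ.hom⟦(1 : ℤ)⟧')
    rw [← cancel_epi eY.inv, ← cancel_mono (eZ.hom⟦(1 : ℤ)⟧')]
    simpa using this
  let π : X ⟶ (τ.truncGE n).obj X := (τ.truncGEπ n).app X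
  obtain ⟨s, hs⟩ : ∃ s : (τ.truncGE n).obj X ⟶ X, 𝟙 _ = s ≫ π :=
    Triangle.coyoneda_exact₃ _ (τ.triangleLTGE_distinguished n X)
      (𝟙 ((τ.truncGE n).obj X)) (by
        change _ ≫ (τ.truncGEδLT n).app X = 0
        rw [hδ, comp_zero])
  have i3 : IsIso ((homologyFunctor C n).map π) :=
    isIso_homology_mor₂ _ (τ.triangleLTGE_distinguished n X) n
      (isZero_of_isLE ((τ.truncLT n).obj X) (n-1) n (by lia))
      (isZero_of_isLE ((τ.truncLT n).obj X) (n-1) (n+1) (by lia))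
  have i4 : IsIso ((homologyFunctor C n).map s) := by
    have h : (homologyFunctor C n).map s = inv ((homologyFunctor C n).map π) := by
      rw [← cancel_mono ((homologyFunctor C n).map π), ← Functor.map_comp, ← hs]
      simp
    rw [h]; infer_instance
  let ψ : (singleFunctor C n).obj Y ⟶ t :=
    eY.inv ≫ s ≫ Q.map p ≫ e.inv ≫ ι'
  have i5 : IsIso ((homologyFunctor C n).map ψ) := by
    simp only [ψ, Functor.map_comp]
    infer_instance
  obtain ⟨eH⟩ := nonempty_homology_single Y n
  let j : (homologyFunctor C n).obj t ≅ Y := (asIso ((homologyFunctor C n).map ψ)).symm ≪≫ eH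
  refine ⟨(singleFunctor C n).map j.hom ≫ ψ, ?_⟩
  rw [Functor.map_comp]
  infer_instance

end Hered

/-- Let `A` be a hereditary abelian category with enough injectives (hereditary:
all `Ext^n` for `n ≥ 2` vanish, expressed by the vanishing of `n`-fold shifted
morphisms between objects of `A` in the derived category).  Then every object `t` of
the unbounded derived category `D(A)` is isomorphic to the direct sum over `n ∈ ℤ` of
its shifted homology objects `H^n(t)[n]` (i.e. `H^n(t)` placed in degree `n`). -/
theorem stmt_14 {C : Type*} [Category C] [Abelian C] [EnoughInjectives C]
    [HasDerivedCategory C]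
    (hher : ∀ (X Y : C) (n : ℤ), 2 ≤ n →
      ∀ f : (DerivedCategory.singleFunctor C 0).obj X ⟶
        ((DerivedCategory.singleFunctor C 0).obj Y)⟦n⟧, f = 0)
    (t : DerivedCategory C)
    [HasCoproduct fun n : ℤ =>
      (DerivedCategory.singleFunctor C n).obj ((DerivedCategory.homologyFunctor C n).obj t)] :
    Nonempty (t ≅ ∐ fun n : ℤ =>
      (DerivedCategory.singleFunctor C n).obj ((DerivedCategory.homologyFunctor C n).obj t)) := by
  let F : ℤ → DerivedCategory C := fun n =>
    (DerivedCategory.singleFunctor C n).obj ((DerivedCategory.homologyFunctor C n).obj t)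
  change Nonempty (t ≅ ∐ F)
  have hF : HasCoproduct F := by assumption
  choose φ hφ using Hered.exists_section hher t
  let Φ : ∐ F ⟶ t := Sigma.desc φ
  have hι : ∀ n, Sigma.ι F n ≫ Φ = φ n := fun n => by simp [Φ, F]
  suffices IsIso Φ from ⟨(asIso Φ).symm⟩
  rw [DerivedCategory.isIso_iff]
  intro m
  let H := DerivedCategory.homologyFunctor C m
  have hm : IsIso (H.map (φ m)) := hφ m
  have hepi : Epi (H.map Φ) := by
    have : Epi (H.map (Sigma.ι F m) ≫ H.map Φ) := by
      rw [← H.map_comp, hι]; infer_instance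
    exact epi_of_epi (H.map (Sigma.ι F m)) _
  have hmono : Mono (H.map Φ) := by
    let I := Injective.under (H.obj (∐ F))
    obtain ⟨e⟩ := Hered.nonempty_homology_single I m
    let g : H.obj (∐ F) ⟶ H.obj ((DerivedCategory.singleFunctor C m).obj I) :=
      Injective.ι _ ≫ e.inv
    obtain ⟨g', hg'⟩ := Hered.exists_of_homology _ I m g
    obtain ⟨h', hh'⟩ := Hered.exists_of_homology t I m (inv (H.map (φ m)) ≫ H.map (Sigma.ι F m) ≫ g)
    have key : Φ ≫ h' = g' := by
      refine Sigma.hom_ext _ _ fun n => ?_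
      rw [← sub_eq_zero]
      apply Hered.eq_zero_of_homology
      by_cases hn : n = m
      · subst hn
        rw [Functor.map_sub, ← Category.assoc, hι, Functor.map_comp, Functor.map_comp, hh', hg']
        simp [H]
      · have : IsZero (H.obj (F n)) := by
          rcases lt_or_gt_of_ne hn with h | h
          · exact DerivedCategory.isZero_of_isLE _ n m h
          · exact DerivedCategory.isZero_of_isGE _ n m h
        exact this.eq_of_src _ _
    have hg : Mono (H.map Φ ≫ H.map h') := by
      rw [← H.map_comp, key]
      change Mono ((DerivedCategory.homologyFunctor C m).map g')
      rw [hg']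
      infer_instance
    exact mono_of_mono _ (H.map h')
  exact isIso_of_mono_of_epi (H.map Φ)
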